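/- The half-period map satisfies lim_{p₀ → 0⁺} 𝒯(p₀)/2 = π/(2√2), and consequently inf_{p₀ ∈ (0, √2)} 𝒯(p₀)/2 = π/(2√2). -/

import Mathlib

open Real Set Filter MeasureTheory
open scoped Topology

/-- The potential `g` from the Hamiltonian `H(x,p) = p²/2 + g(x)`. -/
noncomputable def g (x : ℝ) : ℝ := if |x| ≤ 1 then 1 - (1 - x ^ 2) ^ 4 else 1

/-- The derivative of `g`. -/
noncomputable def g' (x : ℝ) : ℝ := if |x| ≤ 1 then 8 * x * (1 - x ^ 2) ^ 3 else 0

/-- `(q, p)` is a (global) solution of the Hamiltonian system (HS): `q̇ = p`, `ṗ = -g'(q)`. -/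
def IsHSSol (q p : ℝ → ℝ) : Prop :=
  (∀ t : ℝ, HasDerivAt q (p t) t) ∧ (∀ t : ℝ, HasDerivAt p (-(g' (q t))) t)

/-- `F` is the flow of (HS): `F t q₀ p₀ = (q t, p t)` for the solution with data `(q₀, p₀)`. -/
def IsHSFlow (F : ℝ → ℝ → ℝ → ℝ × ℝ) : Prop :=
  ∀ q₀ p₀ : ℝ,
    IsHSSol (fun t => (F t q₀ p₀).1) (fun t => (F t q₀ p₀).2) ∧ F 0 q₀ p₀ = (q₀, p₀)

/-- The set `([0,∞) × {2}) ∪ ({0} × (0,2])`, codomain of the map `Δ`. -/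
def Dset : Set (ℝ × ℝ) := (Ici (0:ℝ) ×ˢ ({2} : Set ℝ)) ∪ ({(0:ℝ)} ×ˢ Ioc (0:ℝ) 2)

/-- `T` is the smallest positive period of `q`. -/
def IsSmallestPeriod (q : ℝ → ℝ) (T : ℝ) : Prop :=
  0 < T ∧ Function.Periodic q T ∧ ∀ T' : ℝ, 0 < T' → Function.Periodic q T' → T ≤ T'

/-- `T` is the period map `𝒯`, assigning to `p₀ ∈ (0, √2)` the smallest positive period of
the `q`-component of the solution of (HS) with initial datum `(0, p₀)`. -/
def IsPeriodMap (F : ℝ → ℝ → ℝ → ℝ × ℝ) (T : ℝ → ℝ) : Prop :=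
  ∀ p₀ ∈ Ioo (0:ℝ) (Real.sqrt 2), IsSmallestPeriod (fun t => (F t 0 p₀).1) (T p₀)

/-- `Δ` associates to `(t,x)` the datum in `Dset` whose orbit stays positive on `(0,t)`
and reaches `x` at time `t`. -/
def IsDeltaMap (F : ℝ → ℝ → ℝ → ℝ × ℝ) (Δ : ℝ → ℝ → ℝ × ℝ) : Prop :=
  ∀ t x : ℝ, 0 < t → 0 < x →
    Δ t x ∈ Dset ∧ (F t (Δ t x).1 (Δ t x).2).1 = x ∧
      ∀ s ∈ Ioo (0:ℝ) t, 0 < (F s (Δ t x).1 (Δ t x).2).1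

/-- The solution `u` of the conservation law built from the flow `F` and the map `Δ`
(extended by `0` at `x = 0`). -/
noncomputable def usol (F : ℝ → ℝ → ℝ → ℝ × ℝ) (Δ : ℝ → ℝ → ℝ × ℝ) (t x : ℝ) : ℝ :=
  if 0 < x then (F t (Δ t x).1 (Δ t x).2).2
  else if x < 0 then -(F t (Δ t (-x)).1 (Δ t (-x)).2).2
  else 0

/-!
A trajectory of (HS) issued from `(0, p₀)` with `0 < p₀ < √2` stays in `{g ≤ p₀² / 2}`, where
`4 (2 - p₀²) x ≤ g' x ≤ 8 x` for `x ≥ 0`. Sturm comparison with the harmonic oscillators of these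
two stiffnesses places the first return time `a` to `q = 0` between `π / (2√2)` and
`π / (2√(2 - p₀²))`. By conservation of energy the velocity at time `a` is `-p₀`, so the central
symmetry of the system together with uniqueness makes `q` antiperiodic with antiperiod `a`. Hence
`𝒯(p₀) = 2a`, and both bounds on `a` tend to `π / (2√2)` as `p₀ → 0⁺`.
-/

section FirstZero

variable {f : ℝ → ℝ} {a b c f' : ℝ}

lemma exists_first_zero_of_eventually_pos (hf : Continuous f) (hpos : ∀ᶠ t in 𝓝[>] c, 0 < f t)
    (hcb : c < b) (hb : f b ≤ 0) : ∃ a ∈ Ioc c b, f a = 0 ∧ ∀ t ∈ Ioo c a, 0 < f t := by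
  obtain ⟨d, hcd : c < d, hd⟩ := mem_nhdsGT_iff_exists_Ioo_subset.1 hpos
  have hdb : d ≤ b := le_of_not_gt fun hbd => hb.not_gt (hd ⟨hcb, hbd⟩)
  obtain ⟨a, ⟨⟨hda, hab⟩, hfa : f a ≤ 0⟩, hmin⟩ :=
    (isCompact_Icc.inter_right (isClosed_le hf continuous_const) :
      IsCompact (Icc d b ∩ {t | f t ≤ 0})).exists_isLeast ⟨b, ⟨hdb, le_rfl⟩, hb⟩
  have hca : c < a := hcd.trans_le hda
  have hpos_before : ∀ t ∈ Ioo c a, 0 < f t := fun t ht => by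
    rcases lt_or_ge t d with htd | hdt
    · exact hd ⟨ht.1, htd⟩
    · exact lt_of_not_ge fun hft => ht.2.not_ge (hmin ⟨⟨hdt, ht.2.le.trans hab⟩, hft⟩)
  have hfa_nonneg : 0 ≤ f a :=
    ge_of_tendsto ((hf.tendsto a).mono_left (nhdsWithin_le_nhds (s := Iio a)))
      (mem_of_superset (Ioo_mem_nhdsLT hca) fun t ht => (hpos_before t ht).le)
  exact ⟨a, ⟨hca, hab⟩, hfa.antisymm hfa_nonneg, hpos_before⟩

lemma eventually_nhdsGT_pos_of_hasDerivAt_pos (hf : HasDerivAt f f' c) (hf' : 0 < f')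
    (hc : f c = 0) : ∀ᶠ t in 𝓝[>] c, 0 < f t := by
  have hsign := eventually_nhdsWithin_sign_eq_of_deriv_pos (hf.deriv.symm ▸ hf') hc
  filter_upwards [hsign.filter_mono nhdsWithin_le_nhds, self_mem_nhdsWithin] with t ht hct
  rwa [sign_pos (sub_pos.2 hct), sign_eq_one_iff] at ht

lemma hasDerivAt_nonpos_of_pos_left (hf : HasDerivAt f f' a) (ha : f a = 0)
    (hca : c < a) (hpos : ∀ t ∈ Ioo c a, 0 < f t) : f' ≤ 0 := by
  by_contra! hf'
  have hsign := eventually_nhdsWithin_sign_eq_of_deriv_pos (hf.deriv.symm ▸ hf') ha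
  obtain ⟨t, ht, hct⟩ :=
    ((hsign.filter_mono nhdsWithin_le_nhds).and (Ioo_mem_nhdsLT hca)).exists
  rw [sign_neg (sub_neg.2 hct.2), sign_eq_neg_one_iff] at ht
  exact ht.not_gt (hpos t hct)

end FirstZero

section SmallestPeriod

variable {q : ℝ → ℝ} {a T T' : ℝ}

lemma IsSmallestPeriod.unique (hT : IsSmallestPeriod q T) (hT' : IsSmallestPeriod q T') : T = T' :=
  (hT.2.2 T' hT'.1 hT'.2.1).antisymm (hT'.2.2 T hT.1 hT.2.1)

lemma isSmallestPeriod_two_mul_of_antiperiodic (ha : 0 < a) (hq : Function.Antiperiodic q a)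
    (h0 : q 0 = 0) (hpos : ∀ t ∈ Ioo 0 a, 0 < q t) : IsSmallestPeriod q (2 * a) := by
  refine ⟨by positivity, hq.periodic_two_mul, fun T hT hperiodic => ?_⟩
  by_contra! hTa
  have hqT : q T = 0 := by rw [hperiodic.eq, h0]
  rcases lt_trichotomy T a with h | rfl | h
  · exact (hpos T ⟨hT, h⟩).ne' hqT
  · have hhalf := hpos (T / 2) ⟨by linarith, by linarith⟩
    linarith [hq (T / 2), hperiodic (T / 2)]
  · have hshift := hpos (T - a) ⟨by linarith, by linarith⟩
    linarith [hq.sub_eq T]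

end SmallestPeriod

section SturmComparison

variable {q p r : ℝ → ℝ} {a ω : ℝ}

lemma hasDerivAt_wronskian_sin {t : ℝ} (hq : HasDerivAt q (p t) t) (hp : HasDerivAt p (-r t) t) :
    HasDerivAt (fun s => q s * (ω * cos (ω * s)) - p s * sin (ω * s))
      ((r t - ω ^ 2 * q t) * sin (ω * t)) t := by
  have hω : HasDerivAt (fun s => ω * s) ω t := by simpa using (hasDerivAt_id t).const_mul ω
  exact ((hq.mul (hω.cos.const_mul ω)).sub (hp.mul hω.sin)).congr_deriv (by ring)

lemma sin_mul_nonneg_of_mem_Ioo {t : ℝ} (hω : 0 < ω) (ht : t ∈ Ioo 0 (π / ω)) :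
    0 ≤ sin (ω * t) :=
  sin_nonneg_of_nonneg_of_le_pi (mul_nonneg hω.le ht.1.le) ((lt_div_iff₀' hω).1 ht.2).le

lemma exists_nonpos_of_sq_mul_le (hq : ∀ t, HasDerivAt q (p t) t) (hp : ∀ t, HasDerivAt p (-r t) t)
    (h0 : 0 ≤ q 0) (hω : 0 < ω) (hr : ∀ t ∈ Ioo 0 (π / ω), 0 < q t → ω ^ 2 * q t ≤ r t) :
    ∃ b ∈ Ioc 0 (π / ω), q b ≤ 0 := by
  by_contra! hpos
  have hW := fun t => hasDerivAt_wronskian_sin (ω := ω) (hq t) (hp t)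
  have hmono : MonotoneOn (fun t => q t * (ω * cos (ω * t)) - p t * sin (ω * t))
      (Icc 0 (π / ω)) := by
    refine monotoneOn_of_hasDerivWithinAt_nonneg (convex_Icc _ _)
      (fun t _ => (hW t).continuousAt.continuousWithinAt)
      (fun t _ => (hW t).hasDerivWithinAt) fun t ht => ?_
    rw [interior_Icc] at ht
    exact mul_nonneg (sub_nonneg.2 (hr t ht (hpos t (Ioo_subset_Ioc_self ht))))
      (sin_mul_nonneg_of_mem_Ioo hω ht)
  have hend : 0 < π / ω := by positivity
  have hle : q 0 * ω ≤ -(q (π / ω) * ω) := by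
    simpa [mul_div_cancel₀ π hω.ne'] using
      hmono (left_mem_Icc.2 hend.le) (right_mem_Icc.2 hend.le) hend.le
  have hq_end : 0 < q (π / ω) * ω := mul_pos (hpos _ (right_mem_Ioc.2 hend)) hω
  linarith [mul_nonneg h0 hω.le]

lemma pi_div_le_of_le_sq_mul (hq : ∀ t, HasDerivAt q (p t) t) (hp : ∀ t, HasDerivAt p (-r t) t)
    (h0 : q 0 ≤ 0) (ha : 0 < a) (hqa : q a = 0) (hpa : p a < 0) (hω : 0 < ω)
    (hr : ∀ t ∈ Ioo 0 a, r t ≤ ω ^ 2 * q t) : π / ω ≤ a := by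
  by_contra! haω
  have hW := fun t => hasDerivAt_wronskian_sin (ω := ω) (hq t) (hp t)
  have hanti : AntitoneOn (fun t => q t * (ω * cos (ω * t)) - p t * sin (ω * t)) (Icc 0 a) := by
    refine antitoneOn_of_hasDerivWithinAt_nonpos (convex_Icc _ _)
      (fun t _ => (hW t).continuousAt.continuousWithinAt)
      (fun t _ => (hW t).hasDerivWithinAt) fun t ht => ?_
    rw [interior_Icc] at ht
    exact mul_nonpos_of_nonpos_of_nonneg (sub_nonpos.2 (hr t ht))
      (sin_mul_nonneg_of_mem_Ioo hω ⟨ht.1, ht.2.trans haω⟩)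
  have hle : -(p a * sin (ω * a)) ≤ q 0 * ω := by
    simpa [hqa] using hanti (left_mem_Icc.2 ha.le) (right_mem_Icc.2 ha.le) ha.le
  have hsin : 0 < sin (ω * a) :=
    sin_pos_of_pos_of_lt_pi (mul_pos hω ha) ((lt_div_iff₀' hω).1 haω)
  linarith [mul_neg_of_neg_of_pos hpa hsin, mul_nonpos_of_nonpos_of_nonneg h0 hω.le]

end SturmComparison

/-- `(q, p)` is a global trajectory of Newton's equation `q̇ = p`, `ṗ = -V'(q)` for the force field
`-V'`. The system (HS) is the case `V' = g'`: `IsHSSol` unfolds to `IsNewtonSol g'`. -/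
def IsNewtonSol (V' q p : ℝ → ℝ) : Prop :=
  (∀ t, HasDerivAt q (p t) t) ∧ ∀ t, HasDerivAt p (-V' (q t)) t

namespace IsNewtonSol

variable {V V' q p q₁ p₁ : ℝ → ℝ} {K : NNReal} {a m M : ℝ}

lemma energy_eq (h : IsNewtonSol V' q p) (hV : ∀ x, HasDerivAt V (V' x) x) (s t : ℝ) :
    p s ^ 2 / 2 + V (q s) = p t ^ 2 / 2 + V (q t) := by
  have hderiv : ∀ t, HasDerivAt (fun t => p t ^ 2 / 2 + V (q t)) 0 t := fun t =>
    ((((h.2 t).pow 2).div_const 2).add ((hV (q t)).comp t (h.1 t))).congr_deriv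
      (by push_cast; ring)
  exact is_const_of_deriv_eq_zero (fun t => (hderiv t).differentiableAt)
    (fun t => (hderiv t).deriv) s t

lemma eq_of_initial_eq (h : IsNewtonSol V' q p) (h₁ : IsNewtonSol V' q₁ p₁)
    (hV' : LipschitzWith K V') (hq : q 0 = q₁ 0) (hp : p 0 = p₁ 0) : q = q₁ := by
  have hfield : LipschitzWith (max 1 (K * 1)) fun x : ℝ × ℝ => (x.2, -V' x.1) :=
    LipschitzWith.prod_snd.prodMk (hV'.comp LipschitzWith.prod_fst).neg
  have heq : (fun t => (q t, p t)) = fun t => (q₁ t, p₁ t) :=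
    ODE_solution_unique_univ (v := fun _ x => (x.2, -V' x.1)) (s := fun _ => univ) (t₀ := 0)
      (fun _ => hfield.lipschitzOnWith)
      (fun t => ⟨(h.1 t).prodMk (h.2 t), mem_univ _⟩)
      (fun t => ⟨(h₁.1 t).prodMk (h₁.2 t), mem_univ _⟩) (by rw [hq, hp])
  exact funext fun t => congrArg Prod.fst (congrFun heq t)

lemma neg_comp_add_const (h : IsNewtonSol V' q p) (hodd : V'.Odd) (a : ℝ) :
    IsNewtonSol V' (fun t => -q (t + a)) fun t => -p (t + a) :=
  ⟨fun t => ((h.1 (t + a)).comp_add_const t a).neg, fun t =>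
    ((h.2 (t + a)).comp_add_const t a).neg.congr_deriv (by rw [hodd])⟩

lemma antiperiodic_of_return (h : IsNewtonSol V' q p) (hV' : LipschitzWith K V') (hodd : V'.Odd)
    (hqa : q a = -q 0) (hpa : p a = -p 0) : Function.Antiperiodic q a := fun t => by
  have heq := h.eq_of_initial_eq (h.neg_comp_add_const hodd a) hV' (by simp [hqa]) (by simp [hpa])
  rw [congrFun heq t, neg_neg]

lemma velocity_eq_neg_of_first_return (h : IsNewtonSol V' q p) (hV : ∀ x, HasDerivAt V (V' x) x)
    (hp : 0 ≤ p 0) (h0 : q 0 = 0) (ha : 0 < a) (hqa : q a = 0) (hpos : ∀ t ∈ Ioo 0 a, 0 < q t) :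
    p a = -p 0 := by
  have henergy := h.energy_eq hV a 0
  rw [hqa, h0] at henergy
  have hpa : p a ≤ 0 := hasDerivAt_nonpos_of_pos_left (h.1 a) hqa ha hpos
  rcases sq_eq_sq_iff_eq_or_eq_neg.1 (by linarith : p a ^ 2 = p 0 ^ 2) with heq | heq
  · linarith
  · exact heq

theorem exists_isSmallestPeriod_two_mul (h : IsNewtonSol V' q p)
    (hV : ∀ x, HasDerivAt V (V' x) x) (hV' : LipschitzWith K V') (hodd : V'.Odd)
    (h0 : q 0 = 0) (hp : 0 < p 0) (hm : 0 < m) (hM : 0 < M)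
    (hlower : ∀ t, 0 < q t → m ^ 2 * q t ≤ V' (q t))
    (hupper : ∀ t, 0 < q t → V' (q t) ≤ M ^ 2 * q t) :
    ∃ a ∈ Icc (π / M) (π / m), IsSmallestPeriod q (2 * a) := by
  have hcont : Continuous q := continuous_iff_continuousAt.2 fun t => (h.1 t).continuousAt
  obtain ⟨b, hb, hqb⟩ := exists_nonpos_of_sq_mul_le h.1 h.2 h0.ge hm fun t _ => hlower t
  obtain ⟨a, ha, hqa, hpos⟩ := exists_first_zero_of_eventually_pos hcont
    (eventually_nhdsGT_pos_of_hasDerivAt_pos (h.1 0) hp h0) hb.1 hqb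
  have hpa : p a = -p 0 := h.velocity_eq_neg_of_first_return hV hp.le h0 ha.1 hqa hpos
  have hMa : π / M ≤ a := pi_div_le_of_le_sq_mul h.1 h.2 h0.le ha.1 hqa (by linarith) hM
    fun t ht => hupper t (hpos t ht)
  have hanti : Function.Antiperiodic q a :=
    h.antiperiodic_of_return hV' hodd (by simp [hqa, h0]) hpa
  exact ⟨a, ⟨hMa, ha.2.trans hb.2⟩, isSmallestPeriod_two_mul_of_antiperiodic ha.1 hanti h0 hpos⟩

end IsNewtonSol

section Potential

variable {x E : ℝ}

lemma g_zero : g 0 = 0 := by simp [g]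

lemma g_of_one_le_abs (hx : 1 ≤ |x|) : g x = 1 := by
  rcases hx.eq_or_lt with h | h
  · simp [g, ← sq_abs x, ← h]
  · simp [g, h.not_ge]

lemma g'_of_one_le_abs (hx : 1 ≤ |x|) : g' x = 0 := by
  rcases hx.eq_or_lt with h | h
  · simp [g', ← sq_abs x, ← h]
  · simp [g', h.not_ge]

lemma hasDerivWithinAt_g_of_abs_le (hx : |x| ≤ 1) :
    HasDerivWithinAt g (g' x) {y | |y| ≤ 1} x := by
  have hpoly : HasDerivAt (fun y : ℝ => 1 - (1 - y ^ 2) ^ 4) (g' x) x :=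
    ((((hasDerivAt_pow 2 x).const_sub 1).pow 4).const_sub 1).congr_deriv
      (by rw [g', if_pos hx]; push_cast; ring)
  exact hpoly.hasDerivWithinAt.congr_of_mem (fun y hy => if_pos hy) hx

lemma hasDerivWithinAt_g_of_one_le_abs (hx : 1 ≤ |x|) :
    HasDerivWithinAt g (g' x) {y | 1 ≤ |y|} x := by
  rw [g'_of_one_le_abs hx]
  exact (hasDerivWithinAt_const x _ 1).congr_of_mem (fun y hy => g_of_one_le_abs hy) hx

lemma hasDerivAt_g (x : ℝ) : HasDerivAt g (g' x) x := by
  rcases lt_trichotomy |x| 1 with h | h | h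
  · exact (hasDerivWithinAt_g_of_abs_le h.le).hasDerivAt
      ((continuous_abs.continuousAt.eventually_lt_const h).mono fun _ => le_of_lt)
  · exact ((hasDerivWithinAt_g_of_abs_le h.le).union
      (hasDerivWithinAt_g_of_one_le_abs h.ge)).hasDerivAt
        (mem_of_superset univ_mem fun y _ => le_total |y| 1)
  · exact (hasDerivWithinAt_g_of_one_le_abs h.le).hasDerivAt
      ((continuous_abs.continuousAt.eventually_const_lt h).mono fun _ => le_of_lt)

lemma odd_g' : Function.Odd g' := fun x => by
  simp only [g', abs_neg]
  split_ifs <;> ring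

lemma g'_eq_comp_projIcc :
    g' = (Icc (-1) 1).domRestrict (fun x : ℝ => 8 * x * (1 - x ^ 2) ^ 3) ∘
      projIcc (-1) 1 (neg_le_self zero_le_one) :=
  funext fun x => by
    rcases le_total |x| 1 with h | h
    · simp [g', h, projIcc_of_mem _ (abs_le.1 h)]
    · rw [g'_of_one_le_abs h]
      rcases le_abs.1 h with h | h
      · simp [projIcc_of_right_le _ h]
      · simp [projIcc_of_le_left _ (le_neg.1 h)]

lemma exists_lipschitzWith_g' : ∃ K, LipschitzWith K g' := by
  obtain ⟨K, hK⟩ : ∃ K, LipschitzOnWith K (fun x : ℝ => 8 * x * (1 - x ^ 2) ^ 3) (Icc (-1) 1) :=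
    ContDiffOn.exists_lipschitzOnWith (n := 1) (by fun_prop) one_ne_zero (convex_Icc _ _)
      isCompact_Icc
  exact ⟨K * 1, g'_eq_comp_projIcc ▸ hK.to_restrict.comp (LipschitzWith.projIcc _)⟩

lemma g'_le_eight_mul (hx : 0 ≤ x) : g' x ≤ 8 * x := by
  unfold g'
  split_ifs with h
  · have hsq : x ^ 2 ≤ 1 := (sq_le_one_iff_abs_le_one x).2 h
    exact mul_le_of_le_one_right (by positivity)
      (pow_le_one₀ (by linarith) (by linarith [sq_nonneg x]))
  · positivity

lemma mul_le_g'_of_g_le (hx : 0 ≤ x) (hgx : g x ≤ E) : 8 * (1 - E) * x ≤ g' x := by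
  rcases le_total |x| 1 with hx1 | hx1
  · have hsq : x ^ 2 ≤ 1 := (sq_le_one_iff_abs_le_one x).2 hx1
    have hpow : 1 - E ≤ (1 - x ^ 2) ^ 3 := calc
      1 - E ≤ (1 - x ^ 2) ^ 4 := by rw [g, if_pos hx1] at hgx; linarith
      _ ≤ (1 - x ^ 2) ^ 3 :=
        pow_le_pow_of_le_one (by linarith) (by linarith [sq_nonneg x]) (by norm_num)
    calc 8 * (1 - E) * x = 8 * x * (1 - E) := by ring
      _ ≤ 8 * x * (1 - x ^ 2) ^ 3 := by gcongr
      _ = g' x := by rw [g', if_pos hx1]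
  · rw [g_of_one_le_abs hx1] at hgx
    rw [g'_of_one_le_abs hx1]
    exact mul_nonpos_of_nonpos_of_nonneg (by linarith) hx

end Potential

lemma IsHSSol.half_smallestPeriod_mem_Icc {q p : ℝ → ℝ} {T : ℝ} (h : IsHSSol q p) (h0 : q 0 = 0)
    (hp : p 0 ∈ Ioo 0 √2) (hT : IsSmallestPeriod q T) :
    T / 2 ∈ Icc (π / (2 * √2)) (π / (2 * √(2 - p 0 ^ 2))) := by
  have hNewton : IsNewtonSol g' q p := h
  have hp_sq : p 0 ^ 2 < 2 := (lt_sqrt hp.1.le).1 hp.2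
  have hm_sq : (2 * √(2 - p 0 ^ 2)) ^ 2 = 8 * (1 - p 0 ^ 2 / 2) := by
    rw [mul_pow, sq_sqrt (by linarith)]; ring
  have hM_sq : (2 * √2) ^ 2 = 8 := by rw [mul_pow, sq_sqrt zero_le_two]; norm_num
  have hg_le (t : ℝ) : g (q t) ≤ p 0 ^ 2 / 2 := by
    have henergy := hNewton.energy_eq hasDerivAt_g t 0
    rw [h0, g_zero] at henergy
    linarith [sq_nonneg (p t)]
  obtain ⟨K, hK⟩ := exists_lipschitzWith_g'
  obtain ⟨a, ha, hperiod⟩ := hNewton.exists_isSmallestPeriod_two_mul hasDerivAt_g hK odd_g' h0 hp.1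
    (m := 2 * √(2 - p 0 ^ 2)) (M := 2 * √2)
    (mul_pos two_pos (sqrt_pos.2 (by linarith))) (by positivity)
    (fun t hqt => hm_sq ▸ mul_le_g'_of_g_le hqt.le (hg_le t))
    (fun t hqt => hM_sq ▸ g'_le_eight_mul hqt.le)
  rwa [hT.unique hperiod, mul_div_cancel_left₀ a two_ne_zero]

lemma tendsto_pi_div_two_mul_sqrt_two_sub_sq :
    Tendsto (fun p₀ : ℝ => π / (2 * √(2 - p₀ ^ 2))) (𝓝 0) (𝓝 (π / (2 * √2))) := by
  have hcont : ContinuousAt (fun p₀ : ℝ => π / (2 * √(2 - p₀ ^ 2))) 0 :=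
    continuousAt_const.div (by fun_prop) (by simp)
  simpa using hcont.tendsto

/-- The half-period map satisfies `lim_{p₀ → 0⁺} 𝒯(p₀)/2 = π/(2√2)`, and consequently
`inf_{p₀ ∈ (0,√2)} 𝒯(p₀)/2 = π/(2√2)`. -/
theorem stmt_11 (F : ℝ → ℝ → ℝ → ℝ × ℝ) (hF : IsHSFlow F)
    (T : ℝ → ℝ) (hT : IsPeriodMap F T)
    (hTmono : StrictMonoOn T (Ioo 0 (Real.sqrt 2))) :
    Tendsto (fun p₀ => T p₀ / 2) (𝓝[>] 0) (𝓝 (π / (2 * Real.sqrt 2))) ∧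
    IsGLB ((fun p₀ => T p₀ / 2) '' Ioo (0:ℝ) (Real.sqrt 2)) (π / (2 * Real.sqrt 2)) := by
  have hbounds : ∀ p₀ ∈ Ioo 0 √2, T p₀ / 2 ∈ Icc (π / (2 * √2)) (π / (2 * √(2 - p₀ ^ 2))) :=
    fun p₀ hp₀ => by
      obtain ⟨hsol, hinit⟩ := hF 0 p₀
      simpa [hinit] using hsol.half_smallestPeriod_mem_Icc (by simp [hinit]) (by simpa [hinit])
        (hT p₀ hp₀)
  have hmem : ∀ᶠ p₀ in 𝓝[>] (0 : ℝ), p₀ ∈ Ioo 0 √2 := Ioo_mem_nhdsGT (by positivity)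
  have hlim : Tendsto (fun p₀ => T p₀ / 2) (𝓝[>] 0) (𝓝 (π / (2 * √2))) :=
    tendsto_of_tendsto_of_tendsto_of_le_of_le' tendsto_const_nhds
      (tendsto_pi_div_two_mul_sqrt_two_sub_sq.mono_left nhdsWithin_le_nhds)
      (hmem.mono fun p₀ hp₀ => (hbounds p₀ hp₀).1) (hmem.mono fun p₀ hp₀ => (hbounds p₀ hp₀).2)
  refine ⟨hlim, isGLB_of_mem_closure ?_ ?_⟩
  · exact forall_mem_image.2 fun p₀ hp₀ => (hbounds p₀ hp₀).1
  · exact mem_closure_of_tendsto hlim (hmem.mono fun p₀ hp₀ => mem_image_of_mem _ hp₀)
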